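/- arXiv:0807.1679 — 4 statements merged into one kernel-verified Lean document; each statement's English description precedes it below -/
import Mathlib

section
/- Let n ≥ 1 and let f : {0,1}^n → ℝ be a nonzero function. Set ρ = (1/n) · Ent(f²)/E[f²]. Then E_x Σ_{y∼x} (f(x) − f(y))² ≥ C(ρ) · Ent(f²), where C(x) = (4/x) · (1/2 − √(H⁻¹(log 2 − x)·(1 − H⁻¹(log 2 − x)))) for x ∈ (0, log 2] and C(0) = 2. -/
/-- Expectation of `g` over the uniform measure on the Hamming cube `{0,1}^n`. -/
noncomputable def cubeE (n : ℕ) (g : (Fin n → Bool) → ℝ) : ℝ :=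
  (∑ x : Fin n → Bool, g x) / 2 ^ n

/-- `E_x ∑_{y ∼ x} (f x - f y)^2` on the Hamming cube `{0,1}^n`. -/
noncomputable def cubeD2 (n : ℕ) (f : (Fin n → Bool) → ℝ) : ℝ :=
  cubeE n (fun x => ∑ i : Fin n, (f x - f (Function.update x i (!x i))) ^ 2)

/-- `Ent(f²) = E[f² log f²] - E[f²] log E[f²]` (note `Real.log 0 = 0`). -/
noncomputable def cubeEnt (n : ℕ) (f : (Fin n → Bool) → ℝ) : ℝ :=
  cubeE n (fun x => f x ^ 2 * Real.log (f x ^ 2)) -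
    cubeE n (fun x => f x ^ 2) * Real.log (cubeE n (fun x => f x ^ 2))

/-- The function `C` of the modified log-Sobolev inequality, given an inverse `Hinv`
of the entropy function `H` on `[0,1/2]`: `C 0 = 2` and for `x ≠ 0`,
`C x = (4/x)·(1/2 − √(H⁻¹(log 2 − x)(1 − H⁻¹(log 2 − x))))`. -/
noncomputable def Cfun (Hinv : ℝ → ℝ) (x : ℝ) : ℝ :=
  if x = 0 then 2
  else (4 / x) *
    (1 / 2 - Real.sqrt (Hinv (Real.log 2 - x) * (1 - Hinv (Real.log 2 - x))))

open Real Set Filter Topology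

/-! ### The tangent-line inequality for `4√(p(1-p))` against the binary entropy -/

/-- The slope of `-4√(p(1-p))` with respect to `-binEntropy p`, at the point `q`. -/
noncomputable def tangentSlope (q : ℝ) : ℝ :=
  4 * sinh ((log (1 - q) - log q) / 2) / (log (1 - q) - log q)

lemma mul_sinh_le_mul_sinh {s t : ℝ} (hs : 0 ≤ s) (hst : s ≤ t) :
    t * sinh s ≤ s * sinh t := by
  have hmono : MonotoneOn (fun x => s * sinh x - x * sinh s) (Ici s) := by
    apply monotoneOn_of_deriv_nonneg (convex_Ici s)
    · fun_prop
    · fun_prop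
    · intro x hx
      rw [interior_Ici] at hx
      have hd : HasDerivAt (fun x => s * sinh x - x * sinh s) (s * cosh x - 1 * sinh s) x :=
        ((hasDerivAt_sinh x).const_mul s).sub ((hasDerivAt_id x).mul_const (sinh s))
      rw [hd.deriv]
      have hle : sinh s ≤ s * cosh s := by
        have hm : MonotoneOn (fun x => x * cosh x - sinh x) (Ici 0) := by
          apply monotoneOn_of_deriv_nonneg (convex_Ici 0)
          · fun_prop
          · fun_prop
          · intro y hy
            rw [interior_Ici] at hy
            have hd : HasDerivAt (fun x => x * cosh x - sinh x)
                ((1 * cosh y + y * sinh y) - cosh y) y :=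
              ((hasDerivAt_id y).mul (hasDerivAt_cosh y)).sub (hasDerivAt_sinh y)
            rw [hd.deriv]
            have : 0 ≤ y * sinh y := mul_nonneg hy.le (sinh_nonneg_iff.2 hy.le)
            linarith
        have := hm self_mem_Ici hs hs
        simp at this
        linarith
      have hc : cosh s ≤ cosh x := by
        rw [cosh_le_cosh, abs_of_nonneg hs, abs_of_nonneg (hs.trans (mem_Ioi.1 hx).le)]
        exact (mem_Ioi.1 hx).le
      nlinarith
  have := hmono self_mem_Ici hst hst
  simp only at this
  linarith

lemma log_one_sub_sub_log_pos {q : ℝ} (hq : q ∈ Ioo (0 : ℝ) (1 / 2)) :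
    0 < log (1 - q) - log q := by
  have := log_lt_log hq.1 (show q < 1 - q by linarith [hq.2])
  linarith

lemma tangentSlope_nonneg {q : ℝ} (hq : q ∈ Ioo (0 : ℝ) (1 / 2)) : 0 ≤ tangentSlope q := by
  have h := log_one_sub_sub_log_pos hq
  have := sinh_nonneg_iff.2 (half_pos h).le
  unfold tangentSlope
  positivity

lemma two_mul_sinh_half_log_odds {p : ℝ} (hp : p ∈ Ioo (0 : ℝ) (1 / 2)) :
    2 * sinh ((log (1 - p) - log p) / 2) = (1 - 2 * p) / √(p * (1 - p)) := by
  have hp0 := hp.1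
  have hp1 : 0 < 1 - p := by linarith [hp.2]
  have e1 : exp ((log (1 - p) - log p) / 2) = √(1 - p) / √p := by
    rw [sub_div, exp_sub, exp_half, exp_half, exp_log hp1, exp_log hp0]
  rw [sinh_eq, exp_neg, e1, sqrt_mul hp0.le]
  have h1 := sqrt_pos.2 hp0
  have h2 := sqrt_pos.2 hp1
  field_simp
  rw [sq_sqrt hp0.le, sq_sqrt hp1.le]
  ring

lemma hasDerivAt_sub_four_sqrt {k p : ℝ} (hp : p ∈ Ioo (0 : ℝ) (1 / 2)) :
    HasDerivAt (fun p => k * binEntropy p - 4 * √(p * (1 - p)))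
      (k * (log (1 - p) - log p) - 4 * sinh ((log (1 - p) - log p) / 2)) p := by
  have hp0 := hp.1
  have hp1 : 0 < 1 - p := by linarith [hp.2]
  have hH := (hasDerivAt_binEntropy hp0.ne' (by linarith [hp.2] : p ≠ 1)).const_mul k
  have hm : HasDerivAt (fun p : ℝ => p * (1 - p)) (1 * (1 - p) + p * (-1)) p :=
    (hasDerivAt_id p).mul ((hasDerivAt_id p).const_sub 1)
  have hs := (hm.sqrt (mul_pos hp0 hp1).ne').const_mul 4
  refine (hH.sub hs).congr_deriv ?_
  have := two_mul_sinh_half_log_odds hp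
  rw [show 4 * sinh ((log (1 - p) - log p) / 2) = 2 * (2 * sinh ((log (1 - p) - log p) / 2)) by
    ring, this]
  have := sqrt_pos.2 (mul_pos hp0 hp1)
  field_simp
  ring

lemma log_odds_anti {p q : ℝ} (hp : 0 < p) (hpq : p ≤ q) (hq : q < 1) :
    log (1 - q) - log q ≤ log (1 - p) - log p := by
  have h1 := log_le_log hp hpq
  have h2 := log_le_log (show 0 < 1 - q by linarith) (show 1 - q ≤ 1 - p by linarith)
  linarith

/-- The function `k * binEntropy - 4√(p(1-p))` with `k` the slope at `q` is minimal at `q`. -/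
lemma tangent_line_of_le_half {p q : ℝ} (hq : q ∈ Ioo (0 : ℝ) (1 / 2)) (hp0 : 0 ≤ p)
    (hp : p ≤ 1 / 2) :
    tangentSlope q * binEntropy q - 4 * √(q * (1 - q)) ≤
      tangentSlope q * binEntropy p - 4 * √(p * (1 - p)) := by
  set k := tangentSlope q with hk
  have hL := log_one_sub_sub_log_pos hq
  have hkL : k * (log (1 - q) - log q) = 4 * sinh ((log (1 - q) - log q) / 2) := by
    rw [hk, tangentSlope]
    field_simp
  have hcont : Continuous (fun p => k * binEntropy p - 4 * √(p * (1 - p))) := by fun_prop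
  rcases le_total p q with hpq | hpq
  · have hanti : AntitoneOn (fun p => k * binEntropy p - 4 * √(p * (1 - p))) (Icc 0 q) := by
      apply antitoneOn_of_deriv_nonpos (convex_Icc 0 q) hcont.continuousOn
      · intro x hx
        rw [interior_Icc] at hx
        exact (hasDerivAt_sub_four_sqrt
          ⟨hx.1, hx.2.trans hq.2⟩).differentiableAt.differentiableWithinAt
      · intro x hx
        rw [interior_Icc] at hx
        rw [(hasDerivAt_sub_four_sqrt ⟨hx.1, hx.2.trans hq.2⟩).deriv]
        have hle := log_odds_anti hx.1 hx.2.le (by linarith [hq.2])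
        have := mul_sinh_le_mul_sinh (half_pos hL).le (div_le_div_of_nonneg_right hle two_pos.le)
        refine nonpos_of_mul_nonpos_right ?_ hL
        nlinarith
    exact hanti ⟨hp0, hpq⟩ ⟨hq.1.le, le_rfl⟩ hpq
  · have hmono : MonotoneOn (fun p => k * binEntropy p - 4 * √(p * (1 - p))) (Icc q (1 / 2)) := by
      apply monotoneOn_of_deriv_nonneg (convex_Icc q (1 / 2)) hcont.continuousOn
      · intro x hx
        rw [interior_Icc] at hx
        exact (hasDerivAt_sub_four_sqrt
          ⟨hq.1.trans hx.1, hx.2⟩).differentiableAt.differentiableWithinAt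
      · intro x hx
        rw [interior_Icc] at hx
        have hx' : x ∈ Ioo (0 : ℝ) (1 / 2) := ⟨hq.1.trans hx.1, hx.2⟩
        rw [(hasDerivAt_sub_four_sqrt hx').deriv]
        have hle := log_odds_anti hq.1 hx.1.le (by linarith [hx.2])
        have := mul_sinh_le_mul_sinh (half_pos (log_one_sub_sub_log_pos hx')).le
          (div_le_div_of_nonneg_right hle two_pos.le)
        refine nonneg_of_mul_nonneg_right (a := log (1 - q) - log q) ?_ hL
        nlinarith
    exact hmono ⟨le_rfl, hq.2.le⟩ ⟨hpq, hp⟩ hpq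

lemma tangent_line {p q : ℝ} (hq : q ∈ Ioo (0 : ℝ) (1 / 2)) (hp : p ∈ Icc (0 : ℝ) 1) :
    tangentSlope q * binEntropy q - 4 * √(q * (1 - q)) ≤
      tangentSlope q * binEntropy p - 4 * √(p * (1 - p)) := by
  rcases le_total p (1 / 2) with h | h
  · exact tangent_line_of_le_half hq hp.1 h
  · have := tangent_line_of_le_half hq (p := 1 - p) (by linarith [hp.2]) (by linarith)
    rwa [binEntropy_one_sub, sub_sub_cancel, mul_comm (1 - p) p] at this

/-! ### Two-point entropy -/

/-- Entropy of the function on two points with values `a` and `b`, under the uniform measure. -/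
noncomputable def pairEnt (a b : ℝ) : ℝ :=
  (a * log a + b * log b) / 2 - (a + b) / 2 * log ((a + b) / 2)

lemma pairEnt_eq_binEntropy {a b : ℝ} (ha : 0 ≤ a) (hb : 0 ≤ b) (hs : 0 < a + b) :
    pairEnt a b = (a + b) / 2 * (log 2 - binEntropy (a / (a + b))) := by
  have h1 : 1 - a / (a + b) = b / (a + b) := by field_simp; ring
  have key : ∀ c : ℝ, 0 ≤ c → c / (a + b) * log (c / (a + b)) * (a + b) =
      c * log c - c * log (a + b) := by
    intro c hc
    rcases hc.eq_or_lt with rfl | hc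
    · simp
    · rw [log_div hc.ne' hs.ne']
      field_simp
  have e : binEntropy (a / (a + b)) * (a + b) =
      (a + b) * log (a + b) - a * log a - b * log b := by
    rw [binEntropy, h1, log_inv, log_inv]
    linear_combination (-1) * key a ha - key b hb
  rw [pairEnt, log_div hs.ne' two_ne_zero]
  linear_combination (1 / 2) * e

/-- The one-dimensional inequality, linearised at `q`. -/
lemma sq_sub_ge_tangent {q : ℝ} (hq : q ∈ Ioo (0 : ℝ) (1 / 2)) (a b : ℝ) :
    (2 - 4 * √(q * (1 - q)) - tangentSlope q * (log 2 - binEntropy q)) * ((a ^ 2 + b ^ 2) / 2) +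
      tangentSlope q * pairEnt (a ^ 2) (b ^ 2) ≤ (a - b) ^ 2 := by
  rcases (add_nonneg (sq_nonneg a) (sq_nonneg b)).eq_or_lt with h0 | hs
  · have ha : a = 0 := by nlinarith [sq_nonneg a, sq_nonneg b]
    have hb : b = 0 := by nlinarith [sq_nonneg a, sq_nonneg b]
    simp [ha, hb, pairEnt]
  · set S := a ^ 2 + b ^ 2 with hS
    set p := a ^ 2 / S with hp
    have hpm : p ∈ Icc (0 : ℝ) 1 :=
      ⟨by positivity, (div_le_one hs).2 (by linarith [sq_nonneg b])⟩
    have ht := tangent_line hq hpm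
    rw [pairEnt_eq_binEntropy (sq_nonneg a) (sq_nonneg b) hs, ← hS, ← hp]
    have hsq : S * √(p * (1 - p)) = |a * b| := by
      have : p * (1 - p) = (a * b / S) ^ 2 := by
        rw [hp]
        field_simp
        rw [hS]
        ring
      rw [this, sqrt_sq_eq_abs, abs_div, abs_of_pos hs]
      field_simp
    have hab := le_abs_self (a * b)
    have := mul_le_mul_of_nonneg_left ht (half_pos hs).le
    nlinarith

lemma mul_log_div_ge {a s A S : ℝ} (ha : 0 ≤ a) (hs : 0 < s) (hA : 0 ≤ A) (hS : 0 < S)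
    (h : A = 0 → a = 0) :
    a - s * A / S ≤ a * (log a - log s) - a * (log A - log S) := by
  rcases ha.eq_or_lt with rfl | ha
  · have : 0 ≤ s * A / S := by positivity
    simpa
  · have hA : 0 < A := hA.lt_of_ne fun h0 => ha.ne' (h h0.symm)
    have hx : 0 < s * A / (a * S) := by positivity
    have hl := log_le_sub_one_of_pos hx
    rw [log_div (by positivity) (by positivity), log_mul hs.ne' hA.ne', log_mul ha.ne' hS.ne'] at hl
    have := mul_le_mul_of_nonneg_left hl ha.le
    have e : a * (s * A / (a * S) - 1) = s * A / S - a := by field_simp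
    linarith

lemma pairEnt_ge_tangent {a b A B : ℝ} (ha : 0 ≤ a) (hb : 0 ≤ b) (hA : 0 ≤ A) (hB : 0 ≤ B)
    (haA : A = 0 → a = 0) (hbB : B = 0 → b = 0) :
    a * ((log A - log ((A + B) / 2)) / 2) + b * ((log B - log ((A + B) / 2)) / 2) ≤
      pairEnt a b := by
  rcases (add_nonneg ha hb).eq_or_lt with h0 | hs
  · have h1 : a = 0 := by linarith
    have h2 : b = 0 := by linarith
    simp [h1, h2, pairEnt]
  · have hS : 0 < A + B := by
      by_contra hn
      have h1 := haA (by linarith)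
      have h2 := hbB (by linarith)
      linarith
    have h1 := mul_log_div_ge ha (half_pos hs) hA (half_pos hS) haA
    have h2 := mul_log_div_ge hb (half_pos hs) hB (half_pos hS) hbB
    have e : (a + b) / 2 * A / ((A + B) / 2) + (a + b) / 2 * B / ((A + B) / 2) = a + b := by
      field_simp
    rw [pairEnt]
    linarith

/-! ### Expectations on the cube -/

lemma cubeE_add (n : ℕ) (g h : (Fin n → Bool) → ℝ) :
    cubeE n (fun x => g x + h x) = cubeE n g + cubeE n h := by
  simp only [cubeE, Finset.sum_add_distrib, add_div]

lemma cubeE_mul_const (n : ℕ) (g : (Fin n → Bool) → ℝ) (c : ℝ) :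
    cubeE n (fun x => g x * c) = cubeE n g * c := by
  simp only [cubeE, ← Finset.sum_mul]
  ring

lemma cubeE_const (n : ℕ) (c : ℝ) : cubeE n (fun _ => c) = c := by
  simp [cubeE]

lemma cubeE_mono {n : ℕ} {g h : (Fin n → Bool) → ℝ} (hgh : ∀ x, g x ≤ h x) :
    cubeE n g ≤ cubeE n h := by
  unfold cubeE
  gcongr
  exact hgh _

lemma cubeE_nonneg {n : ℕ} {g : (Fin n → Bool) → ℝ} (hg : ∀ x, 0 ≤ g x) : 0 ≤ cubeE n g := by
  simpa [cubeE_const] using cubeE_mono (g := fun _ => 0) hg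

lemma le_two_pow_mul_cubeE {n : ℕ} {g : (Fin n → Bool) → ℝ} (hg : ∀ x, 0 ≤ g x)
    (x : Fin n → Bool) : g x ≤ 2 ^ n * cubeE n g := by
  rw [cubeE, mul_div_cancel₀ _ (by positivity)]
  exact Finset.single_le_sum (fun y _ => hg y) (Finset.mem_univ x)

lemma eq_zero_of_cubeE_eq_zero {n : ℕ} {g : (Fin n → Bool) → ℝ} (hg : ∀ x, 0 ≤ g x)
    (h : cubeE n g = 0) (x : Fin n → Bool) : g x = 0 := by
  have := le_two_pow_mul_cubeE hg x
  rw [h, mul_zero] at this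
  exact le_antisymm this (hg x)

lemma cubeE_succ (n : ℕ) (g : (Fin (n + 1) → Bool) → ℝ) :
    cubeE (n + 1) g =
      (cubeE n (fun y => g (Fin.cons true y)) + cubeE n (fun y => g (Fin.cons false y))) / 2 := by
  have h : ∑ x, g x = ∑ y, g (Fin.cons true y) + ∑ y, g (Fin.cons false y) := by
    rw [← (Fin.consEquiv fun _ : Fin (n + 1) => Bool).sum_comp, Fintype.sum_prod_type,
      Fintype.sum_bool]
    rfl
  rw [cubeE, cubeE, cubeE, h]
  field_simp
  ring

lemma cubeD2_succ (n : ℕ) (f : (Fin (n + 1) → Bool) → ℝ) :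
    cubeD2 (n + 1) f =
      (cubeD2 n (fun y => f (Fin.cons true y)) + cubeD2 n (fun y => f (Fin.cons false y))) / 2 +
        cubeE n (fun y => (f (Fin.cons true y) - f (Fin.cons false y)) ^ 2) := by
  have hsym : cubeE n (fun y => (f (Fin.cons false y) - f (Fin.cons true y)) ^ 2) =
      cubeE n (fun y => (f (Fin.cons true y) - f (Fin.cons false y)) ^ 2) := by
    congr 1
    funext y
    ring
  simp only [cubeD2, cubeE_succ, Fin.sum_univ_succ, Fin.cons_zero, Fin.cons_succ,
    Fin.update_cons_zero, ← Fin.cons_update, Bool.not_true, Bool.not_false, cubeE_add, hsym]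
  ring

/-- Subadditivity of the entropy with respect to one coordinate. -/
lemma cubeEnt_succ_le (n : ℕ) (f : (Fin (n + 1) → Bool) → ℝ) :
    cubeEnt (n + 1) f ≤
      (cubeEnt n (fun y => f (Fin.cons true y)) + cubeEnt n (fun y => f (Fin.cons false y))) / 2 +
        cubeE n (fun y => pairEnt (f (Fin.cons true y) ^ 2) (f (Fin.cons false y) ^ 2)) := by
  set A := cubeE n (fun y => f (Fin.cons true y) ^ 2) with hA
  set B := cubeE n (fun y => f (Fin.cons false y) ^ 2) with hB
  have hA0 : 0 ≤ A := cubeE_nonneg fun y => sq_nonneg _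
  have hB0 : 0 ≤ B := cubeE_nonneg fun y => sq_nonneg _
  have key := cubeE_mono fun y => pairEnt_ge_tangent
    (sq_nonneg (f (Fin.cons true y))) (sq_nonneg (f (Fin.cons false y))) hA0 hB0
    (fun h => eq_zero_of_cubeE_eq_zero (fun y => sq_nonneg (f (Fin.cons true y))) h y)
    (fun h => eq_zero_of_cubeE_eq_zero (fun y => sq_nonneg (f (Fin.cons false y))) h y)
  rw [cubeE_add, cubeE_mul_const, cubeE_mul_const, ← hA, ← hB] at key
  simp only [cubeEnt, cubeE_succ, ← hA, ← hB]
  linarith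

/-- The linearised inequality on the cube, obtained from the two-point one by tensorisation. -/
lemma linear_log_sobolev {c k : ℝ} (hk : 0 ≤ k)
    (h2 : ∀ a b : ℝ, c * ((a ^ 2 + b ^ 2) / 2) + k * pairEnt (a ^ 2) (b ^ 2) ≤ (a - b) ^ 2)
    (n : ℕ) (f : (Fin n → Bool) → ℝ) :
    c * (n * cubeE n (fun x => f x ^ 2)) + k * cubeEnt n f ≤ cubeD2 n f := by
  induction n with
  | zero => simp [cubeEnt, cubeD2, cubeE]
  | succ n ih =>
    have hT := ih fun y => f (Fin.cons true y)
    have hF := ih fun y => f (Fin.cons false y)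
    have hE := mul_le_mul_of_nonneg_left (cubeEnt_succ_le n f) hk
    have hP := cubeE_mono fun y => h2 (f (Fin.cons true y)) (f (Fin.cons false y))
    simp only [mul_comm c, mul_comm k, cubeE_add, cubeE_mul_const, div_eq_mul_inv] at hP
    rw [cubeD2_succ, cubeE_succ]
    push_cast
    linarith

lemma cubeEnt_nonneg {n : ℕ} {f : (Fin n → Bool) → ℝ} (hE : 0 < cubeE n (fun x => f x ^ 2)) :
    0 ≤ cubeEnt n f := by
  set A := cubeE n (fun x => f x ^ 2) with hA
  have key : cubeE n (fun x => f x ^ 2 + (-A + f x ^ 2 * log A)) ≤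
      cubeE n (fun x => f x ^ 2 * log (f x ^ 2)) := by
    refine cubeE_mono fun x => ?_
    have := mul_log_div_ge (sq_nonneg (f x)) hE one_pos.le one_pos
      (fun h => absurd h one_ne_zero)
    simp only [log_one] at this
    linarith
  rw [cubeE_add, cubeE_add, cubeE_const, cubeE_mul_const, ← hA] at key
  rw [cubeEnt, ← hA]
  linarith

lemma cubeEnt_le {n : ℕ} {f : (Fin n → Bool) → ℝ} (hE : 0 < cubeE n (fun x => f x ^ 2)) :
    cubeEnt n f ≤ log 2 * (n * cubeE n (fun x => f x ^ 2)) := by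
  set A := cubeE n (fun x => f x ^ 2) with hA
  have key : cubeE n (fun x => f x ^ 2 * log (f x ^ 2)) ≤
      cubeE n (fun x => f x ^ 2 * (n * log 2 + log A)) := by
    refine cubeE_mono fun x => ?_
    rcases (sq_nonneg (f x)).eq_or_lt with h | h
    · simp [← h]
    · have hl := log_le_log h (le_two_pow_mul_cubeE (fun x => sq_nonneg (f x)) x)
      rw [← hA, log_mul (by positivity) hE.ne', log_pow 2 n] at hl
      exact mul_le_mul_of_nonneg_left hl h.le
  rw [cubeE_mul_const, ← hA] at key
  rw [cubeEnt, ← hA]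
  linarith

/-- **Modified logarithmic Sobolev inequality** on the Hamming cube:
for nonzero `f : {0,1}^n → ℝ` and `ρ = (1/n)·Ent(f²)/E[f²]`,
`E_x ∑_{y∼x} (f x − f y)² ≥ C(ρ)·Ent(f²)`. -/
theorem modified_log_sobolev (n : ℕ) (hn : 1 ≤ n)
    (f : (Fin n → Bool) → ℝ) (hf : f ≠ 0)
    (Hinv : ℝ → ℝ)
    (hHinv : ∀ y ∈ Set.Icc (0 : ℝ) (Real.log 2),
      Hinv y ∈ Set.Icc (0 : ℝ) (1 / 2) ∧
        -(Hinv y) * Real.log (Hinv y) - (1 - Hinv y) * Real.log (1 - Hinv y) = y) :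
    cubeD2 n f ≥
      Cfun Hinv (cubeEnt n f / (n * cubeE n (fun x => f x ^ 2))) * cubeEnt n f := by
  have hE : 0 < cubeE n (fun x => f x ^ 2) := by
    refine (cubeE_nonneg fun x => sq_nonneg (f x)).lt_of_ne fun h => hf (funext fun x => ?_)
    exact pow_eq_zero_iff two_ne_zero |>.1
      (eq_zero_of_cubeE_eq_zero (fun x => sq_nonneg (f x)) h.symm x)
  have hN : 0 < n * cubeE n (fun x => f x ^ 2) :=
    mul_pos (Nat.cast_pos.2 hn) hE
  have hD : 0 ≤ cubeD2 n f := cubeE_nonneg fun x => Finset.sum_nonneg fun i _ => sq_nonneg _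
  have hle := cubeEnt_le hE
  have hge := cubeEnt_nonneg hE
  set N := n * cubeE n (fun x => f x ^ 2) with hNdef
  set ρ := cubeEnt n f / N with hρ
  have hEnt : cubeEnt n f = ρ * N := by rw [hρ]; field_simp
  by_cases h0 : ρ = 0
  · rw [hEnt, h0, zero_mul, mul_zero]
    exact hD
  have hρmem : log 2 - ρ ∈ Icc (0 : ℝ) (log 2) :=
    ⟨sub_nonneg.2 ((div_le_iff₀ hN).2 hle), sub_le_self _ (div_nonneg hge hN.le)⟩
  obtain ⟨⟨hh0, hh1⟩, hH⟩ := hHinv _ hρmem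
  rw [Cfun, if_neg h0]
  set h := Hinv (log 2 - ρ) with hh
  have hHb : binEntropy h = log 2 - ρ := by
    rw [← hH, binEntropy, log_inv, log_inv]
    ring
  have hrhs : 4 / ρ * (1 / 2 - √(h * (1 - h))) * cubeEnt n f =
      (2 - 4 * √(h * (1 - h))) * N := by
    rw [hEnt]
    field_simp
    ring
  rw [hrhs, ge_iff_le]
  have hlt : h < 1 / 2 := by
    refine hh1.lt_of_ne fun he => h0 ?_
    rw [he, one_div, binEntropy_two_inv] at hHb
    linarith
  have hcont : Continuous fun q : ℝ => (2 - 4 * √(q * (1 - q))) * N := by fun_prop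
  refine le_of_tendsto (hcont.continuousWithinAt (s := Ioi h) (x := h)) ?_
  filter_upwards [Ioo_mem_nhdsGT hlt] with q hq
  have hq' : q ∈ Ioo (0 : ℝ) (1 / 2) := ⟨hh0.trans_lt hq.1, hq.2⟩
  have hk := tangentSlope_nonneg hq'
  have hlin := linear_log_sobolev hk (sq_sub_ge_tangent hq') n f
  rw [← hNdef, hEnt] at hlin
  have hmono : binEntropy h ≤ binEntropy q :=
    binEntropy_strictMonoOn.monotoneOn ⟨hh0, by linarith⟩
      ⟨hq'.1.le, by linarith [hq.2]⟩ hq.1.le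
  have : 0 ≤ tangentSlope q * (binEntropy q - binEntropy h) * N :=
    mul_nonneg (mul_nonneg hk (sub_nonneg.2 hmono)) hN.le
  rw [hHb] at this
  linarith
end

section
/- Let α : [0, log 2] → [0,1] be the inverse of the strictly increasing function t ↦ ψ(t)/(1+t) on [0,1]. Then the function c(t) = 4α(t)/(t·(1 + α(t))) (with c(0) := lim_{t→0} 4α(t)/(t(1+α(t))) = 2) is strictly increasing and convex on [0, log 2], with c(0) = 2 and c(log 2) = 2/log 2 (so c maps [0, log 2] onto [2, 2/log 2]). -/
/-- `ψ(t) = (1/2)(1−√t)² log((1−√t)²) + (1/2)(1+√t)² log((1+√t)²) − (1+t) log(1+t)`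
(note `Real.log 0 = 0`). -/
noncomputable def psi (t : ℝ) : ℝ :=
  (1 / 2) * (1 - Real.sqrt t) ^ 2 * Real.log ((1 - Real.sqrt t) ^ 2) +
    (1 / 2) * (1 + Real.sqrt t) ^ 2 * Real.log ((1 + Real.sqrt t) ^ 2) -
    (1 + t) * Real.log (1 + t)

/-- The function `c(t) = 4α(t)/(t(1+α(t)))` for `t ≠ 0`, with `c(0) = 2`. -/
noncomputable def cOf (α : ℝ → ℝ) (t : ℝ) : ℝ :=
  if t = 0 then 2 else 4 * α t / (t * (1 + α t))

open Set Filter Topology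

/-- The Legendre transform of `log ∘ cosh`, in the slope parameter. -/
noncomputable def entropyParam (u : ℝ) : ℝ :=
  u * Real.sinh u / Real.cosh u - Real.log (Real.cosh u)

/-- The function `2 (1 - sech u)`. -/
noncomputable def sechParam (u : ℝ) : ℝ := 2 * (1 - 1 / Real.cosh u)

/-- The derivative of `sechParam` with respect to `entropyParam`. -/
noncomputable def firstRatio (u : ℝ) : ℝ := 2 * Real.sinh u / u

/-- The derivative of `firstRatio` with respect to `entropyParam`. -/
noncomputable def secondRatio (u : ℝ) : ℝ :=
  2 * Real.cosh u ^ 2 * ((u * Real.cosh u - Real.sinh u) / u ^ 3)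

/-- The derivative of `sechParam / entropyParam` with respect to `entropyParam`. -/
noncomputable def quotientSlope (u : ℝ) : ℝ :=
  (entropyParam u * firstRatio u - sechParam u) / entropyParam u ^ 2

lemma hasDerivAt_entropyParam (u : ℝ) :
    HasDerivAt entropyParam (u / Real.cosh u ^ 2) u := by
  have hc := Real.cosh_pos u
  have h := (((hasDerivAt_id u).mul (Real.hasDerivAt_sinh u)).div (Real.hasDerivAt_cosh u)
    hc.ne').sub ((Real.hasDerivAt_cosh u).log hc.ne')
  refine h.congr_deriv ?_
  simp only [id, Pi.mul_apply]
  field_simp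
  linear_combination u * Real.cosh_sq u

lemma hasDerivAt_sechParam {u : ℝ} (hu : u ≠ 0) :
    HasDerivAt sechParam (u / Real.cosh u ^ 2 * firstRatio u) u := by
  have hc := Real.cosh_pos u
  have h := (((hasDerivAt_const u (1 : ℝ)).div (Real.hasDerivAt_cosh u) hc.ne').const_sub
    1).const_mul 2
  refine h.congr_deriv ?_
  unfold firstRatio
  field_simp
  ring

lemma hasDerivAt_firstRatio {u : ℝ} (hu : u ≠ 0) :
    HasDerivAt firstRatio (u / Real.cosh u ^ 2 * secondRatio u) u := by
  have hc := Real.cosh_pos u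
  refine (((Real.hasDerivAt_sinh u).const_mul 2).div (hasDerivAt_id u) hu).congr_deriv ?_
  unfold secondRatio
  simp only [id]
  field_simp

lemma continuous_entropyParam : Continuous entropyParam :=
  continuous_iff_continuousAt.2 fun u => (hasDerivAt_entropyParam u).continuousAt

lemma continuous_sechParam : Continuous sechParam := by
  unfold sechParam
  have : ∀ u, Real.cosh u ≠ 0 := fun u => (Real.cosh_pos u).ne'
  fun_prop (disch := assumption)

lemma entropyParam_zero : entropyParam 0 = 0 := by simp [entropyParam]

lemma sechParam_zero : sechParam 0 = 0 := by simp [sechParam]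

lemma strictMonoOn_of_hasDerivAt_pos {f f' : ℝ → ℝ} {a b : ℝ} (hf : ContinuousOn f (Icc a b))
    (hd : ∀ x ∈ Ioo a b, HasDerivAt f (f' x) x) (hp : ∀ x ∈ Ioo a b, 0 < f' x) :
    StrictMonoOn f (Icc a b) := by
  refine strictMonoOn_of_deriv_pos (convex_Icc a b) hf fun x hx => ?_
  rw [interior_Icc] at hx
  rw [(hd x hx).deriv]
  exact hp x hx

lemma monotoneOn_of_hasDerivAt_nonneg {f f' : ℝ → ℝ} {a b : ℝ} (hf : ContinuousOn f (Icc a b))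
    (hd : ∀ x ∈ Ioo a b, HasDerivAt f (f' x) x) (hp : ∀ x ∈ Ioo a b, 0 ≤ f' x) :
    MonotoneOn f (Icc a b) := by
  refine monotoneOn_of_deriv_nonneg (convex_Icc a b) hf
    (fun x hx => ?_) fun x hx => ?_ <;> rw [interior_Icc] at hx
  · exact (hd x hx).differentiableAt.differentiableWithinAt
  rw [(hd x hx).deriv]
  exact hp x hx

lemma entropyParam_pos {u : ℝ} (hu : 0 < u) : 0 < entropyParam u := by
  rw [← entropyParam_zero]
  refine strictMonoOn_of_hasDerivAt_pos continuous_entropyParam.continuousOn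
    (fun x _ => hasDerivAt_entropyParam x) (fun x hx => ?_)
    (left_mem_Icc.2 hu.le) (right_mem_Icc.2 hu.le) hu
  have := hx.1
  have := Real.cosh_pos x
  positivity

lemma sinh_lt_mul_cosh {u : ℝ} (hu : 0 < u) : Real.sinh u < u * Real.cosh u := by
  have hd (x : ℝ) : HasDerivAt (fun x => x * Real.cosh x - Real.sinh x) (x * Real.sinh x) x :=
    (((hasDerivAt_id x).mul (Real.hasDerivAt_cosh x)).sub (Real.hasDerivAt_sinh x)).congr_deriv
      (by simp)
  have h := strictMonoOn_of_hasDerivAt_pos (a := 0) (b := u)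
    (fun x _ => (hd x).continuousAt.continuousWithinAt) (fun x _ => hd x)
    (fun x hx => mul_pos hx.1 (Real.sinh_pos_iff.2 hx.1))
    (left_mem_Icc.2 hu.le) (right_mem_Icc.2 hu.le) hu
  simp at h
  exact h

lemma three_mul_sub_le_sq_mul_sinh {u : ℝ} (hu : 0 ≤ u) :
    3 * (u * Real.cosh u - Real.sinh u) ≤ u ^ 2 * Real.sinh u := by
  have hd (x : ℝ) : HasDerivAt
      (fun x => x ^ 2 * Real.sinh x - 3 * (x * Real.cosh x - Real.sinh x))
      (x * (x * Real.cosh x - Real.sinh x)) x := by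
    refine (((hasDerivAt_pow 2 x).mul (Real.hasDerivAt_sinh x)).sub
      ((((hasDerivAt_id x).mul (Real.hasDerivAt_cosh x)).sub
        (Real.hasDerivAt_sinh x)).const_mul 3)).congr_deriv ?_
    simp
    ring
  have h := monotoneOn_of_hasDerivAt_nonneg (a := 0) (b := u)
    (fun x _ => (hd x).continuousAt.continuousWithinAt) (fun x _ => hd x)
    (fun x hx => mul_nonneg hx.1.le (sub_nonneg.2 (sinh_lt_mul_cosh hx.1).le))
    (left_mem_Icc.2 hu) (right_mem_Icc.2 hu) hu
  simp at h
  exact h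

lemma secondRatio_pos {u : ℝ} (hu : 0 < u) : 0 < secondRatio u := by
  have := sub_pos.2 (sinh_lt_mul_cosh hu)
  have := Real.cosh_pos u
  unfold secondRatio
  positivity

lemma secondRatio_le {u v : ℝ} (hu : 0 < u) (huv : u ≤ v) : secondRatio u ≤ secondRatio v := by
  have hd (x : ℝ) (hx : 0 < x) : HasDerivAt
      (fun x => (x * Real.cosh x - Real.sinh x) / x ^ 3)
      ((x ^ 2 * Real.sinh x - 3 * (x * Real.cosh x - Real.sinh x)) / x ^ 4) x := by
    refine ((((hasDerivAt_id x).mul (Real.hasDerivAt_cosh x)).sub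
      (Real.hasDerivAt_sinh x)).div (hasDerivAt_pow 3 x) (by positivity)).congr_deriv ?_
    simp
    field_simp
  have h := monotoneOn_of_hasDerivAt_nonneg (a := u) (b := v)
    (fun x hx => (hd x (hu.trans_le hx.1)).continuousAt.continuousWithinAt)
    (fun x hx => hd x (hu.trans hx.1))
    (fun x hx => div_nonneg
      (sub_nonneg.2 (three_mul_sub_le_sq_mul_sinh (hu.trans hx.1).le))
      (pow_nonneg (hu.trans hx.1).le 4))
    (left_mem_Icc.2 huv) (right_mem_Icc.2 huv) huv
  have hc : Real.cosh u ≤ Real.cosh v := by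
    rw [Real.cosh_le_cosh, abs_of_pos hu, abs_of_pos (hu.trans_le huv)]
    exact huv
  have := sub_pos.2 (sinh_lt_mul_cosh hu)
  have := Real.cosh_pos u
  exact mul_le_mul (by gcongr) h (by positivity) (by positivity)

lemma firstRatio_lt {u v : ℝ} (hu : 0 < u) (huv : u < v) : firstRatio u < firstRatio v := by
  refine strictMonoOn_of_hasDerivAt_pos (a := u) (b := v)
    (fun x hx => (hasDerivAt_firstRatio (hu.trans_le hx.1).ne').continuousAt.continuousWithinAt)
    (fun x hx => hasDerivAt_firstRatio (hu.trans hx.1).ne') (fun x hx => ?_)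
    (left_mem_Icc.2 huv.le) (right_mem_Icc.2 huv.le) huv
  have hx := hu.trans hx.1
  have := secondRatio_pos hx
  have := Real.cosh_pos x
  positivity

lemma sechParam_lt {u : ℝ} (hu : 0 < u) : sechParam u < entropyParam u * firstRatio u := by
  have h := strictMonoOn_of_hasDerivAt_pos (a := 0) (b := u)
    (f := fun x => entropyParam x * firstRatio u - sechParam x)
    ((continuous_entropyParam.mul_const _).sub continuous_sechParam).continuousOn
    (fun x hx => ((hasDerivAt_entropyParam x).mul_const _).sub (hasDerivAt_sechParam hx.1.ne'))
    (fun x hx => by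
      have h1 := firstRatio_lt hx.1 hx.2
      have h2 : 0 < x / Real.cosh x ^ 2 := div_pos hx.1 (pow_pos (Real.cosh_pos x) 2)
      rw [← mul_sub]
      exact mul_pos h2 (sub_pos.2 h1))
    (left_mem_Icc.2 hu.le) (right_mem_Icc.2 hu.le) hu
  simp only [entropyParam_zero, sechParam_zero] at h
  linarith

/-- The tangent error of `firstRatio` against `entropyParam`, from the monotonicity of
`secondRatio`. -/
lemma firstRatio_sub_le {u v : ℝ} (hu : 0 < u) (huv : u ≤ v) :
    firstRatio v - firstRatio u ≤ secondRatio v * (entropyParam v - entropyParam u) := by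
  have h := monotoneOn_of_hasDerivAt_nonneg (a := u) (b := v)
    (f := fun x => secondRatio v * entropyParam x - firstRatio x)
    (fun x hx => (((hasDerivAt_entropyParam x).const_mul _).sub
      (hasDerivAt_firstRatio (hu.trans_le hx.1).ne')).continuousAt.continuousWithinAt)
    (fun x hx => ((hasDerivAt_entropyParam x).const_mul _).sub
      (hasDerivAt_firstRatio (hu.trans hx.1).ne'))
    (fun x hx => by
      have h0 := hu.trans hx.1
      have h1 := secondRatio_le h0 hx.2.le
      have h2 : 0 < x / Real.cosh x ^ 2 := div_pos h0 (pow_pos (Real.cosh_pos x) 2)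
      rw [mul_comm (secondRatio v), ← mul_sub]
      exact mul_nonneg h2.le (sub_nonneg.2 h1))
    (left_mem_Icc.2 huv) (right_mem_Icc.2 huv) huv
  simp only at h
  linarith

/-- The second-order tangent error of `sechParam` against `entropyParam`. -/
lemma two_mul_sub_sechParam_le {u : ℝ} (hu : 0 < u) :
    2 * (entropyParam u * firstRatio u - sechParam u) ≤ secondRatio u * entropyParam u ^ 2 := by
  have h := monotoneOn_of_hasDerivAt_nonneg (a := 0) (b := u)
    (f := fun x => sechParam x - entropyParam x * firstRatio u -
      secondRatio u / 2 * (entropyParam u - entropyParam x) ^ 2)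
    ((continuous_sechParam.sub (continuous_entropyParam.mul_const _)).sub
      (((continuous_const.sub continuous_entropyParam).pow 2).const_mul _)).continuousOn
    (fun x hx => ((hasDerivAt_sechParam hx.1.ne').sub
      ((hasDerivAt_entropyParam x).mul_const _)).sub
      ((((hasDerivAt_entropyParam x).const_sub _).pow 2).const_mul _))
    (fun x hx => by
      have h1 := firstRatio_sub_le hx.1 hx.2.le
      have h2 : 0 < x / Real.cosh x ^ 2 := div_pos hx.1 (pow_pos (Real.cosh_pos x) 2)
      have h3 := mul_nonneg h2.le (sub_nonneg.2 h1)
      simp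
      linarith)
    (left_mem_Icc.2 hu.le) (right_mem_Icc.2 hu.le) hu.le
  simp only [entropyParam_zero, sechParam_zero] at h
  linarith

lemma quotientSlope_pos {u : ℝ} (hu : 0 < u) : 0 < quotientSlope u :=
  div_pos (sub_pos.2 (sechParam_lt hu)) (pow_pos (entropyParam_pos hu) 2)

lemma quotientSlope_le {u v : ℝ} (hu : 0 < u) (huv : u ≤ v) :
    quotientSlope u ≤ quotientSlope v := by
  have hd (x : ℝ) (hx : 0 < x) : HasDerivAt quotientSlope
      (x / Real.cosh x ^ 2 * (secondRatio x * entropyParam x ^ 2 -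
        2 * (entropyParam x * firstRatio x - sechParam x)) / entropyParam x ^ 3) x := by
    have h0 := entropyParam_pos hx
    refine ((((hasDerivAt_entropyParam x).mul (hasDerivAt_firstRatio hx.ne')).sub
      (hasDerivAt_sechParam hx.ne')).div ((hasDerivAt_entropyParam x).pow 2)
      (pow_pos h0 2).ne').congr_deriv ?_
    have := Real.cosh_pos x
    simp
    field_simp
  refine monotoneOn_of_hasDerivAt_nonneg (a := u) (b := v)
    (fun x hx => (hd x (hu.trans_le hx.1)).continuousAt.continuousWithinAt)
    (fun x hx => hd x (hu.trans hx.1)) (fun x hx => ?_)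
    (left_mem_Icc.2 huv) (right_mem_Icc.2 huv) huv
  have h0 := hu.trans hx.1
  have h1 := sub_nonneg.2 (two_mul_sub_sechParam_le h0)
  have h2 := entropyParam_pos h0
  positivity

lemma hasDerivAt_sechParam_div_entropyParam {u : ℝ} (hu : 0 < u) :
    HasDerivAt (fun u => sechParam u / entropyParam u)
      (quotientSlope u * (u / Real.cosh u ^ 2)) u := by
  have h0 := entropyParam_pos hu
  refine ((hasDerivAt_sechParam hu.ne').div (hasDerivAt_entropyParam u) h0.ne').congr_deriv ?_
  unfold quotientSlope
  ring

lemma tendsto_sechParam_div_entropyParam :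
    Tendsto (fun u => sechParam u / entropyParam u) (𝓝[>] 0) (𝓝 2) := by
  have hpos : ∀ᶠ u : ℝ in 𝓝[>] 0, 0 < u := self_mem_nhdsWithin
  refine HasDerivAt.lhopital_zero_nhdsGT
    (hpos.mono fun u hu => hasDerivAt_sechParam hu.ne')
    (.of_forall hasDerivAt_entropyParam)
    (hpos.mono fun u hu => (div_pos hu (pow_pos (Real.cosh_pos u) 2)).ne')
    ?_ ?_ ?_
  · exact (sechParam_zero ▸ continuous_sechParam.tendsto 0).mono_left nhdsWithin_le_nhds
  · exact (entropyParam_zero ▸ continuous_entropyParam.tendsto 0).mono_left nhdsWithin_le_nhds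
  have h := ((hasDerivAt_iff_tendsto_slope.1 (Real.hasDerivAt_sinh 0)).const_mul 2).mono_left
    (nhdsWithin_mono (0 : ℝ) (fun x (hx : 0 < x) => hx.ne'))
  simp only [Real.cosh_zero, mul_one] at h
  refine h.congr' (hpos.mono fun u hu => ?_)
  have := Real.cosh_pos u
  simp [slope_def_field, firstRatio]
  field_simp

/-- The normalized entropy `ψ(s²)/(1+s²)`. -/
noncomputable def entropySq (s : ℝ) : ℝ := psi (s ^ 2) / (1 + s ^ 2)

/-- The function `4 s² / (1+s²)` divided by `entropySq`, with its limit value at `0`. -/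
noncomputable def quotientSq : ℝ → ℝ :=
  Function.update (fun s => 4 * s ^ 2 / (entropySq s * (1 + s ^ 2))) 0 2

/-- Twice the inverse hyperbolic tangent. -/
noncomputable def twoArtanh (s : ℝ) : ℝ := Real.log (1 + s) - Real.log (1 - s)

lemma hasDerivAt_twoArtanh {s : ℝ} (h0 : 0 ≤ s) (h1 : s < 1) :
    HasDerivAt twoArtanh (2 / (1 - s ^ 2)) s := by
  have hp : 1 + s ≠ 0 := by positivity
  have hm : 1 - s ≠ 0 := by linarith
  have hq : 1 - s ^ 2 ≠ 0 := by nlinarith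
  refine ((((hasDerivAt_id s).const_add 1).log hp).sub
    (((hasDerivAt_id s).const_sub 1).log hm)).congr_deriv ?_
  simp only [id]
  field_simp
  ring

lemma twoArtanh_lt {s t : ℝ} (h0 : 0 ≤ s) (hst : s < t) (h1 : t < 1) :
    twoArtanh s < twoArtanh t := by
  have := Real.log_lt_log (by positivity) (show 1 + s < 1 + t by linarith)
  have := Real.log_lt_log (by linarith) (show 1 - t < 1 - s by linarith)
  unfold twoArtanh
  linarith

lemma twoArtanh_zero : twoArtanh 0 = 0 := by simp [twoArtanh]

lemma twoArtanh_pos {s : ℝ} (h0 : 0 < s) (h1 : s < 1) : 0 < twoArtanh s :=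
  twoArtanh_zero ▸ twoArtanh_lt le_rfl h0 h1

lemma exp_twoArtanh {s : ℝ} (h0 : 0 ≤ s) (h1 : s < 1) :
    Real.exp (twoArtanh s) = (1 + s) / (1 - s) := by
  rw [twoArtanh, Real.exp_sub, Real.exp_log (by positivity), Real.exp_log (by linarith)]

lemma cosh_twoArtanh {s : ℝ} (h0 : 0 ≤ s) (h1 : s < 1) :
    Real.cosh (twoArtanh s) = (1 + s ^ 2) / (1 - s ^ 2) := by
  have hp : 1 + s ≠ 0 := by positivity
  have hm : 1 - s ≠ 0 := by linarith
  have hq : 1 - s ^ 2 ≠ 0 := by nlinarith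
  rw [Real.cosh_eq, Real.exp_neg, exp_twoArtanh h0 h1]
  field_simp
  ring

lemma sinh_twoArtanh {s : ℝ} (h0 : 0 ≤ s) (h1 : s < 1) :
    Real.sinh (twoArtanh s) = 2 * s / (1 - s ^ 2) := by
  have hp : 1 + s ≠ 0 := by positivity
  have hm : 1 - s ≠ 0 := by linarith
  have hq : 1 - s ^ 2 ≠ 0 := by nlinarith
  rw [Real.sinh_eq, Real.exp_neg, exp_twoArtanh h0 h1]
  field_simp
  ring

lemma entropySq_eq {s : ℝ} (h0 : 0 ≤ s) (h1 : s < 1) :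
    entropySq s = entropyParam (twoArtanh s) := by
  have hp : 1 + s ≠ 0 := by positivity
  have hm : 1 - s ≠ 0 := by linarith
  have hq : 1 - s ^ 2 ≠ 0 := by nlinarith
  have hs : 1 + s ^ 2 ≠ 0 := by positivity
  have hlog : Real.log (1 - s ^ 2) = Real.log (1 + s) + Real.log (1 - s) := by
    rw [← Real.log_mul hp hm]
    ring_nf
  rw [entropySq, psi, entropyParam, cosh_twoArtanh h0 h1, sinh_twoArtanh h0 h1,
    Real.sqrt_sq h0, Real.log_div hs hq, Real.log_pow, Real.log_pow, hlog, twoArtanh]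
  push_cast
  field_simp
  ring

lemma quotientSq_eq {s : ℝ} (h0 : 0 < s) (h1 : s < 1) :
    quotientSq s = sechParam (twoArtanh s) / entropyParam (twoArtanh s) := by
  have hq : 1 - s ^ 2 ≠ 0 := by nlinarith
  have hs : 1 + s ^ 2 ≠ 0 := by positivity
  have he := entropyParam_pos (twoArtanh_pos h0 h1)
  rw [quotientSq, Function.update_of_ne h0.ne', entropySq_eq h0.le h1, sechParam,
    cosh_twoArtanh h0.le h1]
  field_simp
  ring

lemma continuous_psi : Continuous psi := by
  unfold psi
  have h (f : ℝ → ℝ) (hf : Continuous f) : Continuous fun t => f t * Real.log (f t) :=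
    Real.continuous_mul_log.comp hf
  refine Continuous.sub (Continuous.add ?_ ?_) (h _ (by fun_prop)) <;> simp only [mul_assoc] <;>
    exact (h _ (by fun_prop)).const_mul _

lemma continuous_entropySq : Continuous entropySq :=
  (continuous_psi.comp (continuous_pow 2)).div (by fun_prop) fun s => by positivity

lemma entropySq_zero : entropySq 0 = 0 := by simp [entropySq, psi]

lemma entropySq_one : entropySq 1 = Real.log 2 := by
  have : Real.log ((1 + 1) ^ 2) = 2 * Real.log 2 := by
    rw [Real.log_pow]
    norm_num
  simp only [entropySq, psi, one_pow, Real.sqrt_one, this]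
  norm_num
  ring

lemma hasDerivAt_entropySq {s : ℝ} (hs : s ∈ Ioo (0 : ℝ) 1) :
    HasDerivAt entropySq
      (twoArtanh s / Real.cosh (twoArtanh s) ^ 2 * (2 / (1 - s ^ 2))) s := by
  refine ((hasDerivAt_entropyParam _).comp s
    (hasDerivAt_twoArtanh hs.1.le hs.2)).congr_of_eventuallyEq ?_
  filter_upwards [isOpen_Ioo.mem_nhds hs] with x hx
  exact entropySq_eq hx.1.le hx.2

lemma hasDerivAt_quotientSq {s : ℝ} (hs : s ∈ Ioo (0 : ℝ) 1) :
    HasDerivAt quotientSq (quotientSlope (twoArtanh s) *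
      (twoArtanh s / Real.cosh (twoArtanh s) ^ 2 * (2 / (1 - s ^ 2)))) s := by
  rw [← mul_assoc]
  refine ((hasDerivAt_sechParam_div_entropyParam (twoArtanh_pos hs.1 hs.2)).comp s
    (hasDerivAt_twoArtanh hs.1.le hs.2)).congr_of_eventuallyEq ?_
  filter_upwards [isOpen_Ioo.mem_nhds hs] with x hx
  exact quotientSq_eq hx.1 hx.2

lemma deriv_entropySq_pos {s : ℝ} (hs : s ∈ Ioo (0 : ℝ) 1) :
    0 < twoArtanh s / Real.cosh (twoArtanh s) ^ 2 * (2 / (1 - s ^ 2)) := by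
  have := twoArtanh_pos hs.1 hs.2
  have := Real.cosh_pos (twoArtanh s)
  have : 0 < 1 - s ^ 2 := by nlinarith [hs.1, hs.2]
  positivity

lemma strictMonoOn_entropySq : StrictMonoOn entropySq (Icc 0 1) :=
  strictMonoOn_of_hasDerivAt_pos continuous_entropySq.continuousOn
    (fun _ => hasDerivAt_entropySq) fun _ => deriv_entropySq_pos

lemma entropySq_pos {s : ℝ} (h0 : 0 < s) (h1 : s ≤ 1) : 0 < entropySq s :=
  entropySq_zero ▸ strictMonoOn_entropySq (by simp) ⟨h0.le, h1⟩ h0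

lemma tendsto_quotientSq : Tendsto quotientSq (𝓝[>] 0) (𝓝 2) := by
  have hmem : ∀ᶠ s : ℝ in 𝓝[>] 0, s ∈ Ioo (0 : ℝ) 1 := Ioo_mem_nhdsGT one_pos
  have hlim : Tendsto twoArtanh (𝓝[>] 0) (𝓝[>] 0) := by
    refine tendsto_nhdsWithin_iff.2 ⟨?_, hmem.mono fun s hs => twoArtanh_pos hs.1 hs.2⟩
    have := (hasDerivAt_twoArtanh le_rfl one_pos).continuousAt.tendsto
    rw [twoArtanh_zero] at this
    exact this.mono_left nhdsWithin_le_nhds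
  exact (tendsto_sechParam_div_entropyParam.comp hlim).congr'
    (hmem.mono fun s hs => (quotientSq_eq hs.1 hs.2).symm)

lemma continuousOn_quotientSq : ContinuousOn quotientSq (Icc 0 1) := by
  intro s hs
  rcases hs.1.eq_or_lt with rfl | h0
  · have h : ContinuousWithinAt quotientSq (Ioi 0) 0 := by
      have := tendsto_quotientSq
      rwa [ContinuousWithinAt, quotientSq, Function.update_self]
    exact (continuousWithinAt_Ioi_iff_Ici.1 h).mono Icc_subset_Ici_self
  · refine ContinuousAt.continuousWithinAt ?_
    refine (continuousAt_update_of_ne h0.ne').2 ?_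
    have := entropySq_pos h0 hs.2
    have := continuous_entropySq.continuousAt (x := s)
    refine ContinuousAt.div (by fun_prop) (by fun_prop) (by positivity)

lemma strictMonoOn_quotientSq : StrictMonoOn quotientSq (Icc 0 1) :=
  strictMonoOn_of_hasDerivAt_pos continuousOn_quotientSq
    (fun _ => hasDerivAt_quotientSq)
    fun _ hs => mul_pos (quotientSlope_pos (twoArtanh_pos hs.1 hs.2)) (deriv_entropySq_pos hs)

lemma exists_slope_eq_quotientSlope {a b : ℝ} (ha : 0 ≤ a) (hab : a < b) (hb : b ≤ 1) :
    ∃ s ∈ Ioo a b, (quotientSq b - quotientSq a) / (entropySq b - entropySq a) =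
      quotientSlope (twoArtanh s) := by
  have hsub : Icc a b ⊆ Icc 0 1 := Icc_subset_Icc ha hb
  have hsub' : Ioo a b ⊆ Ioo 0 1 := Ioo_subset_Ioo ha hb
  obtain ⟨s, hs, h⟩ := exists_ratio_hasDerivAt_eq_ratio_slope entropySq _ hab
    continuous_entropySq.continuousOn (fun x hx => hasDerivAt_entropySq (hsub' hx))
    quotientSq _ (continuousOn_quotientSq.mono hsub)
    (fun x hx => hasDerivAt_quotientSq (hsub' hx))
  refine ⟨s, hs, ?_⟩
  have hpos := deriv_entropySq_pos (hsub' hs)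
  have hlt := strictMonoOn_entropySq ⟨ha, hab.le.trans hb⟩ ⟨ha.trans hab.le, hb⟩ hab
  rw [div_eq_iff (sub_pos.2 hlt).ne']
  refine mul_right_cancel₀ hpos.ne' (h.trans ?_)
  ring

/-- Let `α : [0, log 2] → [0,1]` be the inverse of `t ↦ ψ(t)/(1+t)`. Then
`c(t) = 4α(t)/(t(1+α(t)))` (with `c(0) = lim_{t→0⁺} 4α(t)/(t(1+α(t))) = 2`) is
strictly increasing and convex on `[0, log 2]`, with `c(0) = 2` and
`c(log 2) = 2/log 2`. -/
theorem cOf_strictMono_convex (α : ℝ → ℝ)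
    (hαmem : ∀ y ∈ Set.Icc (0 : ℝ) (Real.log 2), α y ∈ Set.Icc (0 : ℝ) 1)
    (hαright : ∀ y ∈ Set.Icc (0 : ℝ) (Real.log 2), psi (α y) / (1 + α y) = y)
    (hαleft : ∀ t ∈ Set.Icc (0 : ℝ) 1, α (psi t / (1 + t)) = t) :
    StrictMonoOn (cOf α) (Set.Icc 0 (Real.log 2)) ∧
      ConvexOn ℝ (Set.Icc 0 (Real.log 2)) (cOf α) ∧
      Filter.Tendsto (fun t => 4 * α t / (t * (1 + α t)))
        (nhdsWithin 0 (Set.Ioi 0)) (nhds 2) ∧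
      cOf α 0 = 2 ∧ cOf α (Real.log 2) = 2 / Real.log 2 := by
  set σ : ℝ → ℝ := fun y => √(α y) with hσ
  have hσmem : ∀ y ∈ Icc 0 (Real.log 2), σ y ∈ Icc (0 : ℝ) 1 := fun y hy =>
    ⟨Real.sqrt_nonneg _, Real.sqrt_le_one.2 (hαmem y hy).2⟩
  have hσsq : ∀ y ∈ Icc 0 (Real.log 2), σ y ^ 2 = α y := fun y hy =>
    Real.sq_sqrt (hαmem y hy).1
  have hσright : ∀ y ∈ Icc 0 (Real.log 2), entropySq (σ y) = y := fun y hy => by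
    rw [entropySq, hσsq y hy, hαright y hy]
  have hσmono : StrictMonoOn σ (Icc 0 (Real.log 2)) := fun x hx y hy hxy => by
    rw [← strictMonoOn_entropySq.lt_iff_lt (hσmem x hx) (hσmem y hy), hσright x hx, hσright y hy]
    exact hxy
  have hlog : (0 : ℝ) < Real.log 2 := Real.log_pos one_lt_two
  have h0mem : (0 : ℝ) ∈ Icc 0 (Real.log 2) := left_mem_Icc.2 hlog.le
  have hα0 : α 0 = 0 := by
    have := hαleft 0 (by simp)
    simpa [psi] using this
  have hσ0 : σ 0 = 0 := by simp [hσ, hα0]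
  have hα1 : α (Real.log 2) = 1 := by
    have := hαleft 1 (by simp)
    have h := entropySq_one
    rw [entropySq, one_pow] at h
    rwa [h] at this
  have hc : ∀ y ∈ Icc 0 (Real.log 2), cOf α y = quotientSq (σ y) := fun y hy => by
    rcases hy.1.eq_or_lt with rfl | hpos
    · simp [cOf, quotientSq, hσ0]
    · have hne : σ y ≠ 0 := (hσ0 ▸ hσmono h0mem hy hpos).ne'
      rw [cOf, if_neg hpos.ne', quotientSq, Function.update_of_ne hne, hσsq y hy, hσright y hy]
  refine ⟨fun x hx y hy hxy => ?_, ?_, ?_, by simp [cOf], ?_⟩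
  · rw [hc x hx, hc y hy]
    exact strictMonoOn_quotientSq (hσmem x hx) (hσmem y hy) (hσmono hx hy hxy)
  · refine convexOn_of_slope_mono_adjacent (convex_Icc _ _) fun {x y z} hx hz hxy hyz => ?_
    have hy : y ∈ Icc 0 (Real.log 2) := ⟨hx.1.trans hxy.le, hyz.le.trans hz.2⟩
    obtain ⟨a, ha, hxa⟩ := exists_slope_eq_quotientSlope (hσmem x hx).1 (hσmono hx hy hxy)
      (hσmem y hy).2
    obtain ⟨b, hb, hyb⟩ := exists_slope_eq_quotientSlope (hσmem y hy).1 (hσmono hy hz hyz)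
      (hσmem z hz).2
    rw [hσright x hx, hσright y hy, ← hc x hx, ← hc y hy] at hxa
    rw [hσright y hy, hσright z hz, ← hc y hy, ← hc z hz] at hyb
    rw [hxa, hyb]
    have ha0 := (hσmem x hx).1.trans_lt ha.1
    have hab := ha.2.trans hb.1
    have hb1 := hb.2.trans_le (hσmem z hz).2
    exact quotientSlope_le (twoArtanh_pos ha0 (hab.trans hb1)) (twoArtanh_lt ha0.le hab hb1).le
  · have hmem : ∀ᶠ y : ℝ in 𝓝[>] 0, y ∈ Ioo 0 (Real.log 2) := Ioo_mem_nhdsGT hlog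
    have hσpos : ∀ᶠ y : ℝ in 𝓝[>] 0, 0 < σ y := hmem.mono fun y hy =>
      hσ0 ▸ hσmono h0mem (Ioo_subset_Icc_self hy) hy.1
    have hlim : Tendsto σ (𝓝[>] 0) (𝓝[>] 0) := by
      refine tendsto_nhdsWithin_iff.2 ⟨tendsto_order.2 ⟨fun a ha => ?_, fun b hb => ?_⟩, hσpos⟩
      · exact hσpos.mono fun y hy => ha.trans hy
      · have hb' : 0 < min b 1 := lt_min hb one_pos
        filter_upwards [hmem, Ioo_mem_nhdsGT (entropySq_pos hb' (min_le_right _ _))] with y hy hyb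
        have hy := Ioo_subset_Icc_self hy
        refine lt_of_lt_of_le ?_ (min_le_left b 1)
        rw [← strictMonoOn_entropySq.lt_iff_lt (hσmem y hy) ⟨hb'.le, min_le_right _ _⟩,
          hσright y hy]
        exact hyb.2
    refine (tendsto_quotientSq.comp hlim).congr' (hmem.mono fun y hy => ?_)
    rw [Function.comp_apply, ← hc y (Ioo_subset_Icc_self hy), cOf, if_neg hy.1.ne']
  · rw [cOf, if_neg hlog.ne', hα1]
    field_simp
    norm_num
end

section
/- Let ξ(t) = ψ(t)/(1+t), where ψ(t) = (1/2)(1−√t)² log((1−√t)²) + (1/2)(1+√t)² log((1+√t)²) − (1+t) log(1+t). Then for every t ∈ (0,1), −ξ''(t) > 2·ξ'(t), where ξ' and ξ'' denote the first and second derivatives of ξ. -/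
/-- `ξ(t) = ψ(t)/(1+t)`. -/
noncomputable def xi (t : ℝ) : ℝ := psi t / (1 + t)

/-- The closed form `ξ(t) = log(1−t) − log(1+t) + (2√t/(1+t)) (log(1+√t) − log(1−√t))`. -/
theorem xi_eq {t : ℝ} (h0 : 0 < t) (h1 : t < 1) :
    xi t = Real.log (1 - t) - Real.log (1 + t) +
      2 * √t / (1 + t) * (Real.log (1 + √t) - Real.log (1 - √t)) := by
  have hs1 : √t < 1 := by rw [Real.sqrt_lt' one_pos]; simpa
  have hs0 : 0 < √t := Real.sqrt_pos.2 h0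
  have hsq : √t ^ 2 = t := Real.sq_sqrt h0.le
  have hlog : Real.log (1 - t) = Real.log (1 - √t) + Real.log (1 + √t) := by
    rw [← Real.log_mul (by linarith) (by linarith)]
    congr 1
    linear_combination hsq
  rw [xi, psi, hlog, Real.log_pow, Real.log_pow]
  field_simp
  push_cast
  linear_combination 2 * (Real.log (1 - √t) + Real.log (1 + √t)) * hsq

theorem hasDerivAt_log_one_add_sqrt_sub_log_one_sub_sqrt {t : ℝ} (h0 : 0 < t) (h1 : t < 1) :
    HasDerivAt (fun x : ℝ => Real.log (1 + √x) - Real.log (1 - √x)) (1 / (√t * (1 - t))) t := by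
  have hs1 : √t < 1 := by rw [Real.sqrt_lt' one_pos]; simpa
  have hs0 : 0 < √t := Real.sqrt_pos.2 h0
  have hsq : √t ^ 2 = t := Real.sq_sqrt h0.le
  have hs := Real.hasDerivAt_sqrt h0.ne'
  have hp : 1 + √t ≠ 0 := by linarith
  have hm : 1 - √t ≠ 0 := by linarith
  refine (((hs.const_add 1).log hp).sub ((hs.const_sub 1).log hm)).congr_deriv ?_
  have ht : 1 - t = (1 - √t) * (1 + √t) := by linear_combination hsq
  rw [ht]
  field_simp
  ring

theorem hasDerivAt_xi {t : ℝ} (h0 : 0 < t) (h1 : t < 1) :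
    HasDerivAt xi
      ((1 - t) / (√t * (1 + t) ^ 2) * (Real.log (1 + √t) - Real.log (1 - √t))) t := by
  have hs0 : 0 < √t := Real.sqrt_pos.2 h0
  have hsq : √t ^ 2 = t := Real.sq_sqrt h0.le
  have hs := Real.hasDerivAt_sqrt h0.ne'
  have hp : 1 + t ≠ 0 := by linarith
  have hm : 1 - t ≠ 0 := by linarith
  have hid := hasDerivAt_id' t
  have key := (((hid.const_sub 1).log hm).sub ((hid.const_add 1).log hp)).add
    (((hs.const_mul 2).div (hid.const_add 1) hp).mul
      (hasDerivAt_log_one_add_sqrt_sub_log_one_sub_sqrt h0 h1))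
  refine (key.congr_of_eventuallyEq ?_).congr_deriv ?_
  · filter_upwards [Ioo_mem_nhds h0 h1] with x hx
    exact xi_eq hx.1 hx.2
  · simp only [Pi.div_apply]
    generalize Real.log (1 + √t) - Real.log (1 - √t) = L
    field_simp
    rw [hsq]
    ring

theorem hasDerivAt_deriv_xi {t : ℝ} (h0 : 0 < t) (h1 : t < 1) :
    HasDerivAt (deriv xi)
      (1 / (t * (1 + t) ^ 2) - (1 - t) / (√t * (1 + t) ^ 2) *
        (1 / (1 - t) + 1 / (2 * t) + 2 / (1 + t)) *
        (Real.log (1 + √t) - Real.log (1 - √t))) t := by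
  have hs0 : 0 < √t := Real.sqrt_pos.2 h0
  have hsq : √t ^ 2 = t := Real.sq_sqrt h0.le
  have hs := Real.hasDerivAt_sqrt h0.ne'
  have hp : 1 + t ≠ 0 := by linarith
  have hm : 1 - t ≠ 0 := by linarith
  have hid := hasDerivAt_id' t
  have key := ((hid.const_sub 1).div (hs.mul ((hid.const_add 1).pow 2))
    (mul_ne_zero hs0.ne' (pow_ne_zero 2 hp))).mul
      (hasDerivAt_log_one_add_sqrt_sub_log_one_sub_sqrt h0 h1)
  refine (key.congr_of_eventuallyEq ?_).congr_deriv ?_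
  · filter_upwards [Ioo_mem_nhds h0 h1] with x hx
    exact (hasDerivAt_xi hx.1 hx.2).deriv
  · simp only [Pi.div_apply, Pi.mul_apply, Pi.pow_apply]
    generalize Real.log (1 + √t) - Real.log (1 - √t) = L
    generalize √t = s at *
    subst hsq
    field_simp
    ring

theorem two_mul_add_cube_le_log_sub_log {s : ℝ} (h0 : 0 ≤ s) (h1 : s < 1) :
    2 * s * (1 + s ^ 2 / 3) ≤ Real.log (1 + s) - Real.log (1 - s) := by
  have h := Real.sum_range_le_log_div h0 h1 2
  rw [Real.log_div (by linarith) (by linarith)] at h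
  norm_num [Finset.sum_range_succ] at h
  linarith

/-- For every `t ∈ (0,1)`, `−ξ''(t) > 2·ξ'(t)`. -/
theorem neg_xi_second_deriv_gt :
    ∀ t ∈ Set.Ioo (0 : ℝ) 1, -(deriv (deriv xi) t) > 2 * deriv xi t := by
  rintro t ⟨h0, h1⟩
  rw [(hasDerivAt_deriv_xi h0 h1).deriv, (hasDerivAt_xi h0 h1).deriv]
  have hs0 : 0 < √t := Real.sqrt_pos.2 h0
  have hs1 : √t < 1 := by rw [Real.sqrt_lt' one_pos]; simpa
  have hsq : √t ^ 2 = t := Real.sq_sqrt h0.le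
  have hL := two_mul_add_cube_le_log_sub_log hs0.le hs1
  rw [hsq] at hL
  generalize Real.log (1 + √t) - Real.log (1 - √t) = L at *
  have hm : 0 < 1 - t := by linarith
  have hp : 0 < 1 + t := by linarith
  have hfac : 0 < 1 + 2 * t - 3 * t ^ 2 + 4 * t ^ 3 := by
    nlinarith [mul_pos h0 hm, pow_pos h0 3, sq_nonneg (2 * t - 1)]
  have hpoly : 1 + t < (1 + t / 3) * (1 + 2 * t - 3 * t ^ 2 + 4 * t ^ 3) := by
    have : 0 < t * (4 - 7 * t + 9 * t ^ 2 + 4 * t ^ 3) :=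
      mul_pos h0 (by nlinarith [pow_pos h0 3, sq_nonneg (18 * t - 7)])
    linarith
  have hmain : 2 * √t * (1 + t) < L * (1 + 2 * t - 3 * t ^ 2 + 4 * t ^ 3) := by
    nlinarith [mul_le_mul_of_nonneg_right hL hfac.le, mul_lt_mul_of_pos_left hpoly hs0]
  have hdiff : (1 - t) / (√t * (1 + t) ^ 2) * (1 / (1 - t) + 1 / (2 * t) + 2 / (1 + t)) * L -
      1 / (t * (1 + t) ^ 2) - 2 * ((1 - t) / (√t * (1 + t) ^ 2) * L) =
      (L * (1 + 2 * t - 3 * t ^ 2 + 4 * t ^ 3) - 2 * √t * (1 + t)) /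
        (2 * t * √t * (1 + t) ^ 3) := by
    field_simp
    ring
  have hpos := div_pos (sub_pos.2 hmain) (by positivity : 0 < 2 * t * √t * (1 + t) ^ 3)
  linarith
end

section
/- Let h(t) = (1/2)(1−t)² log((1−t)²) + (1/2)(1+t)² log((1+t)²) − (1+t²) log(1+t²). Then for every x ∈ (0,1), 2x·(h'(x))² > (3−x²)·h(x)·h'(x) + x·(1+x²)·h(x)·h''(x), where h'(x) = 2((1+x) log(1+x) − (1−x) log(1−x) − x log(1+x²)) and h''(x) = 4/(1+x²) − 2 log((1+x²)/(1−x²)). -/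
/-- `h(t) = (1/2)(1−t)² log((1−t)²) + (1/2)(1+t)² log((1+t)²) − (1+t²) log(1+t²)`
(note `Real.log 0 = 0`). -/
noncomputable def hFun (t : ℝ) : ℝ :=
  (1 / 2) * (1 - t) ^ 2 * Real.log ((1 - t) ^ 2) +
    (1 / 2) * (1 + t) ^ 2 * Real.log ((1 + t) ^ 2) -
    (1 + t ^ 2) * Real.log (1 + t ^ 2)

/-- The derivative of `h`:
`h'(t) = 2((1+t) log(1+t) − (1−t) log(1−t) − t log(1+t²))`. -/
noncomputable def hFun' (t : ℝ) : ℝ :=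
  2 * ((1 + t) * Real.log (1 + t) - (1 - t) * Real.log (1 - t) -
    t * Real.log (1 + t ^ 2))

/-- The second derivative of `h`: `h''(t) = 4/(1+t²) − 2 log((1+t²)/(1−t²))`. -/
noncomputable def hFun'' (t : ℝ) : ℝ :=
  4 / (1 + t ^ 2) - 2 * Real.log ((1 + t ^ 2) / (1 - t ^ 2))

/-- A second-order upper bound for `log ((1 + s) / (1 - s))` on `[0, 1/3]`. -/
lemma log_one_add_div_one_sub_le {s : ℝ} (hs0 : 0 ≤ s) (hs : s ≤ 1 / 3) :
    Real.log ((1 + s) / (1 - s)) ≤ 2 * (s + s ^ 3 / (3 * (1 - s ^ 2))) := by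
  have hlog := Real.log_div_le_sum_range_add hs0 (by linarith) 3
  norm_num [Finset.sum_range_succ] at hlog
  have hsq : s ^ 2 ≤ 1 / 9 := by nlinarith
  have hden : 0 < 1 - s ^ 2 := by linarith
  have htail : s ^ 3 / 3 + s ^ 5 / 5 + s ^ 7 / (1 - s ^ 2) ≤ s ^ 3 / (3 * (1 - s ^ 2)) := by
    have hdiff : s ^ 3 / (3 * (1 - s ^ 2)) - (s ^ 3 / 3 + s ^ 5 / 5 + s ^ 7 / (1 - s ^ 2)) =
        s ^ 5 * (2 - 12 * s ^ 2) / (15 * (1 - s ^ 2)) := by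
      field_simp
      ring
    have hnonneg : 0 ≤ s ^ 5 * (2 - 12 * s ^ 2) / (15 * (1 - s ^ 2)) :=
      div_nonneg (mul_nonneg (by positivity) (by linarith)) (by linarith)
    linarith
  linarith

/-- A concave quadratic that is positive at both ends of an interval is positive on it. -/
lemma quadratic_pos_of_endpoints_pos {α β γ a b d : ℝ} (hγ : 0 ≤ γ) (had : a ≤ d) (hdb : d ≤ b)
    (ha : 0 < α + β * a - γ * a ^ 2) (hb : 0 < α + β * b - γ * b ^ 2) :
    0 < α + β * d - γ * d ^ 2 := by
  rcases had.eq_or_lt with rfl | had'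
  · exact ha
  · have hba : 0 < b - a := by linarith
    have hsum : (b - a) * (α + β * d - γ * d ^ 2) =
        (b - d) * (α + β * a - γ * a ^ 2) + (d - a) * (α + β * b - γ * b ^ 2) +
          γ * ((b - a) * ((d - a) * (b - d))) := by ring
    have h₁ : 0 ≤ (b - d) * (α + β * a - γ * a ^ 2) := mul_nonneg (by linarith) ha.le
    have h₂ : 0 < (d - a) * (α + β * b - γ * b ^ 2) := mul_pos (by linarith) hb
    have h₃ : 0 ≤ γ * ((b - a) * ((d - a) * (b - d))) :=
      mul_nonneg hγ (mul_nonneg hba.le (mul_nonneg (by linarith) (by linarith)))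
    exact pos_of_mul_pos_right (by linarith) hba.le

/-- Half the difference of the two sides of the inequality, in terms of
`l = log ((1 + x²) / (1 - x²))` and `d = log ((1 + x)² / (1 + x²))`. -/
def logGap (x l d : ℝ) : ℝ :=
  (1 - x) ^ 2 * (3 - x ^ 2) * l ^ 2 +
    ((3 - 4 * x + 2 * x ^ 2 + 4 * x ^ 3 - x ^ 4) * d + 2 * x * (1 - x) ^ 2) * l -
    2 * x * (1 - x ^ 2) * d ^ 2 - 4 * x ^ 2 * d

lemma logGap_mono_left {x l l' d : ℝ} (hx : x ∈ Set.Ioo (0 : ℝ) 1) (hl : 0 ≤ l) (hll' : l ≤ l')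
    (hd : 0 ≤ d) : logGap x l d ≤ logGap x l' d := by
  obtain ⟨hx0, hx1⟩ := hx
  have hcoeff : 0 ≤ 3 - 4 * x + 2 * x ^ 2 + 4 * x ^ 3 - x ^ 4 := by
    have : x ^ 4 ≤ x ^ 3 := pow_le_pow_of_le_one hx0.le hx1.le (by norm_num)
    nlinarith [pow_pos hx0 3, sq_nonneg (1 - x)]
  have hthree : 0 ≤ 3 - x ^ 2 := by nlinarith
  unfold logGap
  gcongr

lemma logGap_lower_pos {x : ℝ} (hx : x ∈ Set.Ioo (0 : ℝ) 1) :
    0 < logGap x (2 * (x ^ 2 + x ^ 6 / 3)) (2 * (x / (1 + x + x ^ 2))) := by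
  obtain ⟨hx0, hx1⟩ := hx
  have hform : logGap x (2 * (x ^ 2 + x ^ 6 / 3)) (2 * (x / (1 + x + x ^ 2))) =
      x ^ 5 * (4 * (1 - x) + 4 / 3 * x ^ 2 + 56 / 3 * x ^ 3 + 28 / 3 * x ^ 4
        + 28 / 3 * x ^ 5 * (1 - x) + 4 / 3 * x ^ 7 + 16 / 3 * x ^ 8 + 20 / 9 * x ^ 9
        + 8 / 3 * x ^ 9 * (1 - x) + 8 / 3 * x ^ 9 * (1 - x ^ 2) + 8 / 9 * x ^ 12
        + 8 / 9 * x ^ 13 + 4 / 9 * x ^ 13 * (1 - x ^ 2)) / (1 + x + x ^ 2) ^ 2 := by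
    unfold logGap
    field_simp
    ring
  have h₁ : 0 < 1 - x := by linarith
  have h₂ : 0 < 1 - x ^ 2 := by nlinarith
  rw [hform]
  positivity

lemma logGap_upper_pos {x : ℝ} (hx : x ∈ Set.Ioo (0 : ℝ) 1) :
    0 < logGap x (2 * (x ^ 2 + x ^ 6 / 3))
      (2 * x * (3 * (1 + x + x ^ 2) ^ 2 - 2 * x ^ 2) /
        (3 * (1 + x + x ^ 2) * (1 + x ^ 2) * (1 + x) ^ 2)) := by
  obtain ⟨hx0, hx1⟩ := hx
  have hform : logGap x (2 * (x ^ 2 + x ^ 6 / 3))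
      (2 * x * (3 * (1 + x + x ^ 2) ^ 2 - 2 * x ^ 2) /
        (3 * (1 + x + x ^ 2) * (1 + x ^ 2) * (1 + x) ^ 2)) =
      x ^ 7 * (40 + 312 * x + 1016 * x ^ 2 + 2096 * x ^ 3 + 3248 * x ^ 4 + 3932 * x ^ 5
        + 3768 * x ^ 6 + 2972 * x ^ 7 + 2032 * x ^ 8 + 1400 * x ^ 9 + 1136 * x ^ 10
        + 940 * x ^ 11 + 648 * x ^ 12 + 312 * x ^ 13 + 80 * x ^ 14 + 12 * x ^ 15
        + 20 * x ^ 16 + 32 * x ^ 17 + 4 * x ^ 18 + 20 * x ^ 16 * (1 - x ^ 3)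
        + 16 * x ^ 17 * (1 - x ^ 3) + 4 * x ^ 18 * (1 - x ^ 3)) /
        (3 * (1 + x + x ^ 2) * (1 + x ^ 2) * (1 + x) ^ 2) ^ 2 := by
    unfold logGap
    field_simp
    ring
  have h₁ : 0 < 1 - x ^ 3 := sub_pos.2 (pow_lt_one₀ hx0.le hx1 (by norm_num))
  rw [hform]
  positivity

/-- For every `x ∈ (0,1)`,
`2x·(h'(x))² > (3−x²)·h(x)·h'(x) + x·(1+x²)·h(x)·h''(x)`. -/
theorem hFun_convexity_inequality :
    ∀ x ∈ Set.Ioo (0 : ℝ) 1,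
      2 * x * hFun' x ^ 2 >
        (3 - x ^ 2) * hFun x * hFun' x + x * (1 + x ^ 2) * hFun x * hFun'' x := by
  intro x hx
  obtain ⟨hx0, hx1⟩ := id hx
  have hsq : x ^ 2 < 1 := by nlinarith
  have hne₁ : 1 - x ≠ 0 := by linarith
  have hne₂ : 1 + x ≠ 0 := by linarith
  have hne₃ : 1 - x ^ 2 ≠ 0 := by linarith
  have hne₄ : 1 + x ^ 2 ≠ 0 := by positivity
  set s := x / (1 + x + x ^ 2) with hs
  have hs0 : 0 < s := by positivity
  have hs3 : s ≤ 1 / 3 := by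
    rw [hs, div_le_iff₀ (by positivity)]
    nlinarith [sq_nonneg (1 - x)]
  have hratio : (1 + s) / (1 - s) = (1 + x) ^ 2 / (1 + x ^ 2) := by
    have hsub : 1 - s = (1 + x ^ 2) / (1 + x + x ^ 2) := by
      rw [hs]; field_simp; ring
    have hadd : 1 + s = (1 + x) ^ 2 / (1 + x + x ^ 2) := by
      rw [hs]; field_simp; ring
    rw [hsub, hadd, div_div_div_cancel_right₀ (by positivity)]
  set l := Real.log ((1 + x ^ 2) / (1 - x ^ 2)) with hl
  set d := Real.log ((1 + x) ^ 2 / (1 + x ^ 2)) with hd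
  have hl_lower : 2 * (x ^ 2 + x ^ 6 / 3) ≤ l := by
    have := Real.sum_range_le_log_div (sq_nonneg x) hsq 2
    norm_num [Finset.sum_range_succ] at this
    linarith [show (x ^ 2) ^ 3 = x ^ 6 by ring]
  have hd_lower : 2 * s ≤ d := by
    have := Real.sum_range_le_log_div hs0.le (by linarith) 1
    norm_num [Finset.sum_range_succ, hratio] at this
    linarith
  have hd_upper : d ≤ 2 * x * (3 * (1 + x + x ^ 2) ^ 2 - 2 * x ^ 2) /
      (3 * (1 + x + x ^ 2) * (1 + x ^ 2) * (1 + x) ^ 2) := by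
    have hle := log_one_add_div_one_sub_le hs0.le hs3
    rw [hratio] at hle
    have hden : 1 - s ^ 2 = (1 + x ^ 2) * (1 + x) ^ 2 / (1 + x + x ^ 2) ^ 2 := by
      rw [hs]; field_simp; ring
    refine hle.trans_eq ?_
    rw [hden, hs]
    field_simp
    ring
  have hgap : 0 < logGap x l d := by
    refine lt_of_lt_of_le ?_
      (logGap_mono_left hx (by positivity) hl_lower (by linarith))
    have hlo := logGap_lower_pos hx
    have hhi := logGap_upper_pos hx
    have hγ : 0 ≤ 2 * x * (1 - x ^ 2) := mul_nonneg (by linarith) (by linarith)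
    set m := 2 * (x ^ 2 + x ^ 6 / 3)
    have hquad : ∀ e, logGap x m e =
        ((1 - x) ^ 2 * (3 - x ^ 2) * m ^ 2 + 2 * x * (1 - x) ^ 2 * m) +
          ((3 - 4 * x + 2 * x ^ 2 + 4 * x ^ 3 - x ^ 4) * m - 4 * x ^ 2) * e -
          2 * x * (1 - x ^ 2) * e ^ 2 := fun e ↦ by
      unfold logGap
      ring
    rw [hquad] at hlo hhi ⊢
    exact quadratic_pos_of_endpoints_pos hγ hd_lower hd_upper hlo hhi
  have hl_eq : l = Real.log (1 + x ^ 2) - Real.log (1 - x) - Real.log (1 + x) := by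
    rw [hl, Real.log_div hne₄ hne₃, show 1 - x ^ 2 = (1 - x) * (1 + x) by ring,
      Real.log_mul hne₁ hne₂]
    ring
  have hd_eq : d = 2 * Real.log (1 + x) - Real.log (1 + x ^ 2) := by
    rw [hd, Real.log_div (pow_ne_zero 2 hne₂) hne₄, Real.log_pow]
    norm_num
  have hh : hFun x = 2 * x * (l + d) - (1 + x ^ 2) * l := by
    rw [hFun, Real.log_pow, Real.log_pow, hl_eq, hd_eq]
    push_cast
    ring
  have hh' : hFun' x = 2 * (l + d - x * l) := by
    rw [hFun', hl_eq, hd_eq]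
    ring
  have hh'' : (1 + x ^ 2) * hFun'' x = 4 - 2 * (1 + x ^ 2) * l := by
    rw [hFun'', ← hl]
    field_simp
  have hdiff : 2 * x * hFun' x ^ 2 -
      ((3 - x ^ 2) * hFun x * hFun' x + x * (1 + x ^ 2) * hFun x * hFun'' x) =
      2 * logGap x l d := by
    rw [show x * (1 + x ^ 2) * hFun x * hFun'' x = x * hFun x * ((1 + x ^ 2) * hFun'' x) by ring,
      hh'', hh, hh', logGap]
    ring
  linarith
end
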